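/- Let p be a prime, let n ≥ 5, and let a : Fin n → ℚ_p with a i ≠ 0 for every i. Then the diagonal quadratic form ∑ i, a i * (x i)^2 is isotropic over ℚ_p: there exists x : Fin n → ℚ_p with x ≠ 0 and ∑ i, a i * (x i)^2 = 0. -/

import Mathlib

/-!
Multiplying a form by `p` and its coefficients by squares, we may assume that at least three of the
coefficients are `p`-adic units and that the others are units or `p` times units. By Hensel's lemma
it is enough to find a zero modulo `4p` having a unit coordinate at a unit coefficient.

For odd `p` this is a zero modulo `p`, which a ternary unit form has because two quadratic
polynomials over a finite field of odd order take a common value. For `p = 2`, units are odd, so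
combining units, or units with `2` times a unit, gives a zero modulo `4`; if it is not one modulo
`8`, adding `4u = u * 2 ^ 2` for a spare unit coefficient `u` makes it one.
-/

/-- The diagonal form with coefficients `a` is isotropic, i.e. it has a nontrivial zero. Rings other
than fields are allowed, so that zeros can be constructed over `ℤ_[p]`. -/
def DiagonalIsotropic {ι R : Type*} [Fintype ι] [CommSemiring R] (a : ι → R) : Prop :=
  ∃ x : ι → R, x ≠ 0 ∧ ∑ i, a i * x i ^ 2 = 0

namespace DiagonalIsotropic

variable {ι κ R S : Type*} [Fintype ι] [Fintype κ] [CommSemiring R] [CommSemiring S]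

theorem of_comp {a : ι → R} {f : κ → ι} (hf : Function.Injective f)
    (h : DiagonalIsotropic (a ∘ f)) : DiagonalIsotropic a := by
  obtain ⟨x, hx, hsum⟩ := h
  refine ⟨Function.extend f x 0, fun h0 => hx ?_, ?_⟩
  · rw [← Function.extend_comp hf x 0, h0, Pi.zero_comp]
  · rw [← hsum]
    refine (Fintype.sum_of_injective f hf _ _ (fun i hi => ?_) fun k => ?_).symm
    · rw [Function.extend_apply' _ _ _ hi, Pi.zero_apply, zero_pow two_ne_zero, mul_zero]
    · rw [Function.comp_apply, hf.extend_apply]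

theorem map {a : ι → R} (h : DiagonalIsotropic a) {f : R →+* S} (hf : Function.Injective f) :
    DiagonalIsotropic fun i => f (a i) := by
  obtain ⟨x, hx, hsum⟩ := h
  refine ⟨f ∘ x, fun h0 => hx (hf.comp_left ?_), ?_⟩
  · ext i
    simpa using congrFun h0 i
  · simpa using congrArg f hsum

variable [NoZeroDivisors R]

theorem of_mul_sq {a t : ι → R} (ht : ∀ i, t i ≠ 0)
    (h : DiagonalIsotropic fun i => a i * t i ^ 2) : DiagonalIsotropic a := by
  obtain ⟨x, hx, hsum⟩ := h
  obtain ⟨i, hi⟩ := Function.ne_iff.mp hx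
  refine ⟨t * x, Function.ne_iff.mpr ⟨i, mul_ne_zero (ht i) hi⟩, ?_⟩
  simpa only [Pi.mul_apply, mul_pow, mul_assoc] using hsum

theorem const_mul_iff {a : ι → R} {c : R} (hc : c ≠ 0) :
    DiagonalIsotropic (fun i => c * a i) ↔ DiagonalIsotropic a := by
  simp only [DiagonalIsotropic, mul_assoc, ← Finset.mul_sum, mul_eq_zero, hc, false_or]

end DiagonalIsotropic

theorem sum_mul_update_sq {ι R : Type*} [Fintype ι] [DecidableEq ι] [CommRing R] (a x : ι → R)
    (j : ι) (z : R) :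
    ∑ i, a i * Function.update x j z i ^ 2 = ∑ i, a i * x i ^ 2 + a j * (z ^ 2 - x j ^ 2) := by
  rw [← sub_eq_iff_eq_add', ← Finset.sum_sub_distrib, Fintype.sum_eq_single j]
  · rw [Function.update_self, mul_sub]
  · intro i hi
    rw [Function.update_of_ne hi, sub_self]

section Divisibility

variable {p : ℕ} [Fact p.Prime]

theorem padicInt_dvd_or_isUnit (z : ℤ_[p]) : (p : ℤ_[p]) ∣ z ∨ IsUnit z :=
  or_iff_not_imp_right.mpr fun hz =>
    (PadicInt.norm_lt_one_iff_dvd z).mp (PadicInt.not_isUnit_iff.mp hz)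

theorem padicInt_toZMod_eq_zero_iff_dvd {z : ℤ_[p]} :
    PadicInt.toZMod z = 0 ↔ (p : ℤ_[p]) ∣ z := by
  rw [← RingHom.mem_ker, PadicInt.ker_toZMod, PadicInt.maximalIdeal_eq_span_p,
    Ideal.mem_span_singleton]

end Divisibility

section Hensel

variable {p : ℕ} [Fact p.Prime] {ι : Type*} [Fintype ι] {u x : ι → ℤ_[p]} {j : ι}

open Polynomial in
theorem DiagonalIsotropic.of_norm_sum_lt (h : ‖∑ i, u i * x i ^ 2‖ < ‖2 * u j * x j‖ ^ 2) :
    DiagonalIsotropic u := by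
  classical
  let F : ℤ_[p][X] := C (∑ i, u i * x i ^ 2) + C (u j) * (X ^ 2 - C (x j ^ 2))
  have hF (z : ℤ_[p]) : F.aeval z = ∑ i, u i * Function.update x j z i ^ 2 := by
    simp [F, sum_mul_update_sq, -map_sum, -map_pow]
  have hF' (z : ℤ_[p]) : F.derivative.aeval z = 2 * u j * z := by
    rw [mul_comm 2, mul_assoc]
    simp [F, one_add_one_eq_two, -map_sum, -map_pow]
  obtain ⟨z, hz, -, hz', -⟩ := hensels_lemma (F := F) (a := x j) <| by
    rwa [hF, hF', Function.update_eq_self]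
  refine ⟨Function.update x j z, fun h0 => ?_, by rw [← hF, hz]⟩
  have hz0 : z = 0 := by simpa using congrFun h0 j
  rw [hF', hF', hz0, mul_zero, norm_zero] at hz'
  rw [← hz', zero_pow two_ne_zero] at h
  exact h.not_ge (norm_nonneg _)

theorem DiagonalIsotropic.of_four_mul_dvd_sum (hu : IsUnit (u j)) (hx : IsUnit (x j))
    (h : 4 * (p : ℤ_[p]) ∣ ∑ i, u i * x i ^ 2) : DiagonalIsotropic u := by
  obtain ⟨k, hk⟩ := h
  refine of_norm_sum_lt (x := x) (j := j) ?_
  have hp : ‖(p : ℤ_[p]) * k‖ < 1 := (PadicInt.norm_lt_one_iff_dvd _).mpr (dvd_mul_right _ _)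
  have h2 : 0 < ‖(2 : ℤ_[p])‖ := norm_pos_iff.mpr two_ne_zero
  calc ‖∑ i, u i * x i ^ 2‖ = ‖(2 : ℤ_[p])‖ ^ 2 * ‖(p : ℤ_[p]) * k‖ := by
        rw [hk, ← norm_pow, ← norm_mul]
        ring_nf
    _ < ‖(2 : ℤ_[p])‖ ^ 2 := mul_lt_of_lt_one_right (pow_pos h2 2) hp
    _ = ‖2 * u j * x j‖ ^ 2 := by
        rw [norm_mul, norm_mul, PadicInt.isUnit_iff.mp hu, PadicInt.isUnit_iff.mp hx, mul_one,
          mul_one]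

end Hensel

section OddPrime

open Polynomial in
theorem exists_add_mul_sq_add_mul_sq_eq_zero {K : Type*} [Field K] [Finite K]
    (hK : ringChar K ≠ 2) {a b : K} (ha : a ≠ 0) (hb : b ≠ 0) (c : K) :
    ∃ x y : K, c + a * x ^ 2 + b * y ^ 2 = 0 := by
  have := Fintype.ofFinite K
  obtain ⟨x, y, h⟩ := FiniteField.exists_root_sum_quadratic
    (f := C a * X ^ 2 + C 0 * X + C c) (g := C b * X ^ 2 + C 0 * X + C 0)
    (degree_quadratic ha) (degree_quadratic hb) (FiniteField.odd_card_of_char_ne_two hK)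
  refine ⟨x, y, ?_⟩
  simp only [eval_add, eval_mul, eval_C, eval_pow, eval_X] at h
  linear_combination h

variable {p : ℕ} [Fact p.Prime]

theorem DiagonalIsotropic.of_three_units_of_ne_two (hp : p ≠ 2) (u : Fin 3 → ℤ_[p]ˣ) :
    DiagonalIsotropic fun i => (u i : ℤ_[p]) := by
  have hchar : ringChar (ZMod p) ≠ 2 := by rwa [ZMod.ringChar_zmod_n]
  have hne (i) : PadicInt.toZMod (u i : ℤ_[p]) ≠ 0 := ((u i).isUnit.map PadicInt.toZMod).ne_zero
  obtain ⟨x, y, hxy⟩ := exists_add_mul_sq_add_mul_sq_eq_zero hchar (hne 1) (hne 2)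
    (PadicInt.toZMod (u 0 : ℤ_[p]))
  obtain ⟨x, rfl⟩ := ZMod.ringHom_surjective PadicInt.toZMod x
  obtain ⟨y, rfl⟩ := ZMod.ringHom_surjective PadicInt.toZMod y
  have h4 : IsUnit (4 : ℤ_[p]) := by
    have h2 : IsUnit ((2 : ℕ) : ℤ_[p]) := PadicInt.isUnit_iff.mpr <|
      PadicInt.norm_natCast_eq_one_iff.mpr ((Nat.coprime_primes Fact.out Nat.prime_two).mpr hp)
    convert h2.pow 2
    norm_num
  refine of_four_mul_dvd_sum (x := ![1, x, y]) (u 0).isUnit isUnit_one (h4.mul_left_dvd.mpr ?_)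
  rw [← padicInt_toZMod_eq_zero_iff_dvd]
  simpa [Fin.sum_univ_three] using hxy

end OddPrime

section TwoAdic

theorem padicInt_two_dvd_add_of_isUnit {a b : ℤ_[2]} (ha : IsUnit a) (hb : IsUnit b) :
    2 ∣ a + b := by
  have toZMod_eq_one {z : ℤ_[2]} (hz : IsUnit z) : PadicInt.toZMod z = 1 :=
    isUnit_iff_eq_one.mp (hz.map PadicInt.toZMod)
  refine padicInt_toZMod_eq_zero_iff_dvd.mp ?_
  rw [map_add, toZMod_eq_one ha, toZMod_eq_one hb]
  exact CharTwo.add_self_eq_zero 1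

theorem DiagonalIsotropic.of_four_dvd_sum {ι : Type*} [Fintype ι] {u x : ι → ℤ_[2]} {j l : ι}
    (huj : IsUnit (u j)) (hul : IsUnit (u l)) (hxj : IsUnit (x j)) (hxl : x l = 0)
    (h : 4 ∣ ∑ i, u i * x i ^ 2) : DiagonalIsotropic u := by
  classical
  obtain ⟨k, hk⟩ := h
  have hjl : j ≠ l := by
    rintro rfl
    exact hxj.ne_zero hxl
  rcases padicInt_dvd_or_isUnit k with hk2 | hkU
  · exact of_four_mul_dvd_sum huj hxj (hk ▸ mul_dvd_mul_left 4 hk2)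
  · refine of_four_mul_dvd_sum (x := Function.update x l 2) huj
      (by rwa [Function.update_of_ne hjl]) ?_
    have hsum : ∑ i, u i * Function.update x l 2 i ^ 2 = 4 * (k + u l) := by
      rw [sum_mul_update_sq, hk, hxl]
      ring
    exact hsum ▸ mul_dvd_mul_left 4 (padicInt_two_dvd_add_of_isUnit hkU hul)

theorem DiagonalIsotropic.of_three_dyadic_units_of_two_mul_unit (u : Fin 3 → ℤ_[2]ˣ)
    (v : ℤ_[2]ˣ) : DiagonalIsotropic (Fin.cons (2 * v) fun i => ↑(u i) : Fin 4 → ℤ_[2]) := by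
  obtain ⟨k, hk⟩ := padicInt_two_dvd_add_of_isUnit (u 0).isUnit (u 1).isUnit
  have lift (y : ℤ_[2]) (h : 2 ∣ v * y ^ 2 + k) :
      DiagonalIsotropic (Fin.cons (2 * v) fun i => ↑(u i) : Fin 4 → ℤ_[2]) := by
    obtain ⟨q, hq⟩ := h
    have hsum : 2 * v * y ^ 2 + (u 0 + u 1) = 4 * q := by linear_combination hk + 2 * hq
    refine of_four_dvd_sum (x := ![y, 1, 1, 0]) (j := 1) (l := 3) (u 0).isUnit (u 2).isUnit
      isUnit_one rfl ⟨q, ?_⟩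
    simpa [Fin.sum_univ_succ] using hsum
  rcases padicInt_dvd_or_isUnit k with hk2 | hkU
  · exact lift 0 (by simpa using hk2)
  · exact lift 1 (by simpa using padicInt_two_dvd_add_of_isUnit v.isUnit hkU)

theorem DiagonalIsotropic.of_five_dyadic_units (u : Fin 5 → ℤ_[2]ˣ) :
    DiagonalIsotropic fun i => (u i : ℤ_[2]) := by
  obtain ⟨k, hk⟩ := padicInt_two_dvd_add_of_isUnit (u 0).isUnit (u 1).isUnit
  obtain ⟨m, hm⟩ := padicInt_two_dvd_add_of_isUnit (u 2).isUnit (u 3).isUnit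
  have lift (x y : ℤ_[2]) (j : Fin 5) (hj : ![x, x, y, y, 0] j = 1)
      (h : 2 ∣ k * x ^ 2 + m * y ^ 2) : DiagonalIsotropic fun i => (u i : ℤ_[2]) := by
    obtain ⟨q, hq⟩ := h
    have hsum : u 0 * x ^ 2 + u 1 * x ^ 2 + u 2 * y ^ 2 + u 3 * y ^ 2 = 4 * q := by
      linear_combination x ^ 2 * hk + y ^ 2 * hm + 2 * hq
    refine of_four_dvd_sum (x := ![x, x, y, y, 0]) (l := 4) (u j).isUnit (u 4).isUnit
      (hj ▸ isUnit_one) rfl ⟨q, ?_⟩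
    simpa [Fin.sum_univ_five] using hsum
  rcases padicInt_dvd_or_isUnit k with hk2 | hkU
  · exact lift 1 0 0 rfl (by simpa using hk2)
  rcases padicInt_dvd_or_isUnit m with hm2 | hmU
  · exact lift 0 1 2 rfl (by simpa using hm2)
  · exact lift 1 1 0 rfl (by simpa using padicInt_two_dvd_add_of_isUnit hkU hmU)

end TwoAdic

section Parity

variable {p : ℕ} [Fact p.Prime]

theorem padic_natCast_prime_ne_zero : (p : ℚ_[p]) ≠ 0 :=
  Nat.cast_ne_zero.mpr (Fact.out : p.Prime).ne_zero

theorem padic_even_valuation_natCast_mul_iff {a : ℚ_[p]} (ha : a ≠ 0) :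
    Even (p * a).valuation ↔ ¬ Even a.valuation := by
  rw [Padic.valuation_mul padic_natCast_prime_ne_zero ha, Padic.valuation_p, add_comm,
    Int.even_add_one]

theorem exists_mul_sq_eq_unit_of_even_valuation {a : ℚ_[p]} (ha : a ≠ 0) (hv : Even a.valuation) :
    ∃ t : ℚ_[p], t ≠ 0 ∧ ∃ u : ℤ_[p]ˣ, a * t ^ 2 = (u : ℤ_[p]) := by
  obtain ⟨k, hk⟩ := hv
  have hp : (p : ℝ) ≠ 0 := Nat.cast_ne_zero.mpr (Fact.out : p.Prime).ne_zero
  have hnorm : ‖a * ((p : ℚ_[p]) ^ (-k)) ^ 2‖ = 1 := by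
    rw [norm_mul, norm_pow, Padic.norm_p_zpow, Padic.norm_eq_zpow_neg_valuation ha, hk, neg_neg,
      ← zpow_natCast, ← zpow_mul, ← zpow_add₀ hp]
    simp [mul_two]
  exact ⟨_, zpow_ne_zero _ padic_natCast_prime_ne_zero, PadicInt.mkUnits hnorm,
    (PadicInt.mkUnits_eq hnorm).symm⟩

theorem exists_mul_sq_eq_natCast_mul_unit_of_not_even_valuation {a : ℚ_[p]} (ha : a ≠ 0)
    (hv : ¬ Even a.valuation) : ∃ t : ℚ_[p], t ≠ 0 ∧ ∃ u : ℤ_[p]ˣ, a * t ^ 2 = p * (u : ℤ_[p]) := by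
  have hp := padic_natCast_prime_ne_zero (p := p)
  obtain ⟨t, ht, u, hu⟩ := exists_mul_sq_eq_unit_of_even_valuation (mul_ne_zero hp ha)
    ((padic_even_valuation_natCast_mul_iff ha).mpr hv)
  exact ⟨p * t, mul_ne_zero hp ht, u, by linear_combination p * hu⟩

theorem DiagonalIsotropic.of_padicInt {ι : Type*} [Fintype ι] {a t : ι → ℚ_[p]} {u : ι → ℤ_[p]}
    (ht : ∀ i, t i ≠ 0) (hu : ∀ i, a i * t i ^ 2 = u i) (h : DiagonalIsotropic u) :
    DiagonalIsotropic a := by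
  refine .of_mul_sq ht ?_
  simp only [hu]
  exact h.map (f := PadicInt.Coe.ringHom) Subtype.val_injective

theorem DiagonalIsotropic.of_three_even_valuation_of_ne_two (hp : p ≠ 2) {a : Fin 3 → ℚ_[p]}
    (ha : ∀ i, a i ≠ 0) (hv : ∀ i, Even (a i).valuation) : DiagonalIsotropic a := by
  choose t ht u hu using fun i => exists_mul_sq_eq_unit_of_even_valuation (ha i) (hv i)
  exact .of_padicInt ht hu (.of_three_units_of_ne_two hp u)

theorem DiagonalIsotropic.of_five_even_valuation_dyadic {a : Fin 5 → ℚ_[2]} (ha : ∀ i, a i ≠ 0)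
    (hv : ∀ i, Even (a i).valuation) : DiagonalIsotropic a := by
  choose t ht u hu using fun i => exists_mul_sq_eq_unit_of_even_valuation (ha i) (hv i)
  exact .of_padicInt ht hu (.of_five_dyadic_units u)

theorem DiagonalIsotropic.of_three_even_one_odd_valuation_dyadic {a : Fin 3 → ℚ_[2]} {b : ℚ_[2]}
    (ha : ∀ i, a i ≠ 0) (hb : b ≠ 0) (hva : ∀ i, Even (a i).valuation)
    (hvb : ¬ Even b.valuation) : DiagonalIsotropic (Fin.cons b a : Fin 4 → ℚ_[2]) := by
  choose t ht u hu using fun i => exists_mul_sq_eq_unit_of_even_valuation (ha i) (hva i)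
  obtain ⟨s, hs, v, hv⟩ := exists_mul_sq_eq_natCast_mul_unit_of_not_even_valuation hb hvb
  exact .of_padicInt (t := (Fin.cons s t : Fin 4 → ℚ_[2])) (Fin.cases hs ht)
    (Fin.cases (by simpa using! hv) hu) (.of_three_dyadic_units_of_two_mul_unit u v)

theorem DiagonalIsotropic.of_three_even_valuation {ι : Type*} [Fintype ι] (hι : 5 ≤ Fintype.card ι)
    {a : ι → ℚ_[p]} (ha : ∀ i, a i ≠ 0) (e : Fin 3 ↪ ι) (he : ∀ m, Even (a (e m)).valuation) :
    DiagonalIsotropic a := by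
  rcases ne_or_eq p 2 with hp | rfl
  · exact .of_comp e.injective (.of_three_even_valuation_of_ne_two hp (fun m => ha (e m)) he)
  by_cases hall : ∀ i, Even (a i).valuation
  · obtain ⟨f⟩ : Nonempty (Fin 5 ↪ ι) := Function.Embedding.nonempty_of_card_le (by simpa using hι)
    exact .of_comp f.injective
      (.of_five_even_valuation_dyadic (fun m => ha (f m)) fun m => hall (f m))
  · obtain ⟨l, hl⟩ := not_forall.mp hall
    have hle : l ∉ Set.range e := by
      rintro ⟨m, rfl⟩
      exact hl (he m)
    refine .of_comp (f := (Fin.cons l e : Fin 4 → ι))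
      (Fin.cons_injective_iff.mpr ⟨hle, e.injective⟩) ?_
    simp only [Fin.comp_cons]
    exact .of_three_even_one_odd_valuation_dyadic (fun m => ha (e m)) (ha l) he hl

end Parity

/-- Every nondegenerate diagonal quadratic form of rank at least 5 over the field
of p-adic numbers is isotropic. -/
theorem padic_rank_five_isotropic
    (p : ℕ) [Fact p.Prime] (n : ℕ) (hn : 5 ≤ n)
    (a : Fin n → ℚ_[p]) (ha : ∀ i, a i ≠ 0) :
    ∃ x : Fin n → ℚ_[p], x ≠ 0 ∧ ∑ i, a i * (x i) ^ 2 = 0 := by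
  have hcard : 5 ≤ Fintype.card (Fin n) := by rwa [Fintype.card_fin]
  let evens : Finset (Fin n) := {i | Even (a i).valuation}
  let odds : Finset (Fin n) := {i | ¬ Even (a i).valuation}
  have hsplit : evens.card + odds.card = n := by
    rw [Finset.card_filter_add_card_filter_not, Finset.card_univ, Fintype.card_fin]
  obtain h | h : 3 ≤ evens.card ∨ 3 ≤ odds.card := by omega
  · refine DiagonalIsotropic.of_three_even_valuation hcard ha (evens.orderEmbOfCardLe h).toEmbedding
      fun m => ?_
    exact (Finset.mem_filter.mp (evens.orderEmbOfCardLe_mem h m)).2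
  · have hp := padic_natCast_prime_ne_zero (p := p)
    refine (DiagonalIsotropic.const_mul_iff hp).mp (.of_three_even_valuation hcard
      (fun i => mul_ne_zero hp (ha i)) (odds.orderEmbOfCardLe h).toEmbedding fun m => ?_)
    exact (padic_even_valuation_natCast_mul_iff (ha _)).mpr
      (Finset.mem_filter.mp (odds.orderEmbOfCardLe_mem h m)).2
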